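/- Let 0 < α < 1, let A be a real s×s matrix all of whose (complex) eigenvalues λ satisfy λ ≠ 0 and |arg λ| > απ/2, let Q : [0,∞) → ℝ^{s×s} be continuous with q := sup_{t≥0} t^{1-α} ∫₀^t (t-τ)^{α-1} ‖E_{α,α}((t-τ)^α A) Q(τ)‖ τ^{α-1} dτ < 1, and let g : [0,∞) → ℝ^s be continuous with sup_{t≥0} t^{1-α} ∫₀^t (t-τ)^{α-1} ‖E_{α,α}((t-τ)^α A) g(τ)‖ dτ < ∞. Then for every x₀ ∈ ℝ^s there is a unique φ ∈ C⁰_{1-α}([0,∞), ℝ^s) satisfying φ(t) = t^{α-1} E_{α,α}(t^α A) x₀ + ∫₀^t (t-τ)^{α-1} E_{α,α}((t-τ)^α A) Q(τ) φ(τ) dτ + ∫₀^t (t-τ)^{α-1} E_{α,α}((t-τ)^α A) g(τ) dτ for all t > 0; in particular lim_{t→∞} φ(t) = 0. -/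

import Mathlib

open Filter Topology MeasureTheory

attribute [local instance] Matrix.linftyOpNormedAddCommGroup Matrix.linftyOpNormedRing

/-- The matrix Mittag-Leffler function `E_{α,β}(B) = ∑ Bᵏ / Γ(αk + β)`. -/
noncomputable def ML {s : ℕ} (α β : ℝ) (B : Matrix (Fin s) (Fin s) ℝ) :
    Matrix (Fin s) (Fin s) ℝ :=
  ∑' k : ℕ, (Real.Gamma (α * k + β))⁻¹ • B ^ k

/-- Membership in `C⁰_{1-α}([0,∞), ℝ^s)`: continuous on `(0,∞)`, the limit
`lim_{t→0⁺} t^{1-α} x(t)` exists, and `sup_{t≥0} t^{1-α} ‖x(t)‖ < ∞`. -/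
def memC0inf (α : ℝ) {s : ℕ} (x : ℝ → (Fin s → ℝ)) : Prop :=
  ContinuousOn x (Set.Ioi 0) ∧
  (∃ l : Fin s → ℝ, Tendsto (fun t : ℝ => t ^ (1 - α) • x t) (𝓝[>] 0) (𝓝 l)) ∧
  (∃ C : ℝ, ∀ t : ℝ, 0 ≤ t → t ^ (1 - α) * ‖x t‖ ≤ C)

/-!
**Boundedness of `t ↦ E_{α,α}(t^α A)`.** The Laplace transform of `t ↦ t^α E_{α,α}(t^α A)` is
`α s^{α-1} (s^α - A)⁻²`, minus the derivative of `s ↦ (s^α - A)⁻¹`. The spectral condition makes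
`s^α - A` invertible on the closed right half-plane, with inverse `O((1 + |s|^α)⁻¹)`, so this
transform is integrable along vertical lines and the line in the inversion formula may be shifted
to `Re s = 1/t`, where `|e^{st}| = e`. This bounds `t^α E_{α,α}(t^α A)`, hence `E_{α,α}(t^α A)` for
`t ≥ 1`; for `t ≤ 1` it is bounded by continuity.

**Fixed point.** Writing `φ(t) = t^{α-1} y(t)` identifies `C⁰_{1-α}` with the bounded continuous
functions on `[0, ∞)` and turns the equation into `y = c + T y` with `‖T‖ ≤ q < 1`, which a Neumann
series solves uniquely.
-/

/-! ### The Mittag-Leffler function in a Banach algebra -/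

theorem rpow_mul_exp_neg_le_Gamma {b X : ℝ} (hb : 1 ≤ b) (hX : 0 ≤ X) :
    X ^ (b - 1) * Real.exp (-X) ≤ Real.Gamma b := by
  have hΓ : IntegrableOn (fun x : ℝ => Real.exp (-x) * x ^ (b - 1)) (Set.Ioi 0) :=
    Real.GammaIntegral_convergent (by linarith)
  have hsub : Set.Ioi X ⊆ Set.Ioi 0 := Set.Ioi_subset_Ioi hX
  calc X ^ (b - 1) * Real.exp (-X) = ∫ x in Set.Ioi X, X ^ (b - 1) * Real.exp (-x) := by
        rw [integral_const_mul, integral_exp_neg_Ioi]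
    _ ≤ ∫ x in Set.Ioi X, Real.exp (-x) * x ^ (b - 1) := by
        refine setIntegral_mono_on ((integrableOn_exp_neg_Ioi X).const_mul _)
          (hΓ.mono_set hsub) measurableSet_Ioi fun x hx => ?_
        rw [mul_comm]
        exact mul_le_mul_of_nonneg_left
          (Real.rpow_le_rpow hX (le_of_lt hx) (sub_nonneg.2 hb)) (Real.exp_nonneg _)
    _ ≤ ∫ x in Set.Ioi 0, Real.exp (-x) * x ^ (b - 1) := by
        refine setIntegral_mono_set hΓ ?_ hsub.eventuallyLE
        filter_upwards [ae_restrict_mem measurableSet_Ioi] with x hx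
        have : 0 < x := hx
        positivity
    _ = Real.Gamma b := (Real.Gamma_eq_integral (by linarith)).symm

theorem summable_inv_Gamma_mul_pow {α : ℝ} (hα : 0 < α) (β R : ℝ) :
    Summable fun k : ℕ => (Real.Gamma (α * k + β))⁻¹ * R ^ k := by
  set X : ℝ := (|R| + 1) ^ α⁻¹
  have hX0 : 0 < X := by positivity
  have hXα : X ^ α = |R| + 1 := Real.rpow_inv_rpow (by positivity) hα.ne'
  have hratio : |R| / X ^ α < 1 := by rw [hXα, div_lt_one (by positivity)]; linarith
  refine Summable.of_norm_bounded_eventually_nat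
    ((summable_geometric_of_lt_one (by positivity) hratio).mul_left
      (Real.exp X * X ^ (1 - β))) ?_
  have hlarge : ∀ᶠ k : ℕ in atTop, 1 ≤ α * k + β :=
    (tendsto_atTop_add_const_right _ β
      (tendsto_natCast_atTop_atTop.const_mul_atTop hα)).eventually_ge_atTop 1
  filter_upwards [hlarge] with k hk
  have hΓ := rpow_mul_exp_neg_le_Gamma hk hX0.le
  have hsplit : X ^ (α * k + β - 1) = (X ^ α) ^ k * (X ^ (1 - β))⁻¹ := by
    rw [← Real.rpow_mul_natCast hX0.le, ← Real.rpow_neg hX0.le, ← Real.rpow_add hX0]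
    ring_nf
  calc ‖(Real.Gamma (α * k + β))⁻¹ * R ^ k‖ = (Real.Gamma (α * k + β))⁻¹ * |R| ^ k := by
        rw [norm_mul, norm_pow, Real.norm_eq_abs R, Real.norm_of_nonneg
          (inv_nonneg.2 (Real.Gamma_pos_of_pos (by linarith)).le)]
    _ ≤ (X ^ (α * k + β - 1) * Real.exp (-X))⁻¹ * |R| ^ k := by gcongr
    _ = Real.exp X * X ^ (1 - β) * (|R| / X ^ α) ^ k := by
        rw [hsplit, Real.exp_neg, div_pow]; field_simp

/-- The Mittag-Leffler function `E_{α,β}(a) = ∑ aᵏ / Γ(αk + β)` of an element of a topological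
real algebra; `ML` is the case of real matrices. -/
noncomputable def mittagLeffler {𝔸 : Type*} [Ring 𝔸] [Module ℝ 𝔸] [TopologicalSpace 𝔸]
    (α β : ℝ) (a : 𝔸) : 𝔸 :=
  ∑' k : ℕ, (Real.Gamma (α * k + β))⁻¹ • a ^ k

theorem norm_pow_le_one_add_norm_one_mul {𝔸 : Type*} [NormedRing 𝔸] (a : 𝔸) (k : ℕ) :
    ‖a ^ k‖ ≤ (1 + ‖(1 : 𝔸)‖) * ‖a‖ ^ k := by
  rcases k.eq_zero_or_pos with rfl | hk
  · simp
  · exact (norm_pow_le' a hk).trans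
      (le_mul_of_one_le_left (by positivity) (le_add_of_nonneg_right (norm_nonneg _)))

section MittagLeffler

variable {𝔸 : Type*} [NormedRing 𝔸] [NormedAlgebra ℝ 𝔸] [CompleteSpace 𝔸] {α : ℝ}

theorem hasSum_mittagLeffler (hα : 0 < α) (β : ℝ) (a : 𝔸) :
    HasSum (fun k : ℕ => (Real.Gamma (α * k + β))⁻¹ • a ^ k) (mittagLeffler α β a) := by
  refine (Summable.of_norm_bounded
    (((summable_inv_Gamma_mul_pow hα β ‖a‖).norm).mul_left (1 + ‖(1 : 𝔸)‖)) fun k => ?_).hasSum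
  rw [norm_smul, norm_mul, Real.norm_of_nonneg (pow_nonneg (norm_nonneg a) k), mul_left_comm]
  gcongr
  exact norm_pow_le_one_add_norm_one_mul a k

theorem continuous_mittagLeffler (hα : 0 < α) (β : ℝ) :
    Continuous (mittagLeffler α β : 𝔸 → 𝔸) := by
  refine continuous_iff_continuousAt.2 fun a => ?_
  have hsum := ((summable_inv_Gamma_mul_pow hα β (‖a‖ + 1)).norm).mul_left (1 + ‖(1 : 𝔸)‖)
  refine (continuousOn_tsum (s := Metric.ball 0 (‖a‖ + 1)) (fun k => by fun_prop) hsum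
    fun k b hb => ?_).continuousAt (Metric.isOpen_ball.mem_nhds (by simp))
  have hb' : ‖b‖ ≤ ‖a‖ + 1 := (mem_ball_zero_iff.1 hb).le
  rw [norm_smul, norm_mul, Real.norm_of_nonneg (by positivity : 0 ≤ (‖a‖ + 1) ^ k), mul_left_comm]
  gcongr
  exact (norm_pow_le_one_add_norm_one_mul b k).trans (by gcongr)

theorem continuous_mittagLeffler_rpow_smul (hα : 0 < α) (β : ℝ) (a : 𝔸) :
    Continuous fun t : ℝ => mittagLeffler α β (t ^ α • a) :=
  (continuous_mittagLeffler hα β).comp ((Real.continuous_rpow_const hα.le).smul continuous_const)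

theorem map_mittagLeffler {𝔹 : Type*} [NormedRing 𝔹] [NormedAlgebra ℝ 𝔹] (hα : 0 < α) (β : ℝ)
    (ι : 𝔸 →+* 𝔹) (hι : Continuous ι) (a : 𝔸) :
    ι (mittagLeffler α β a) = mittagLeffler α β (ι a) := by
  refine ((hasSum_mittagLeffler hα β a).map ι hι).tsum_eq.symm.trans (tsum_congr fun k => ?_)
  rw [Function.comp_apply, map_real_smul ι hι, map_pow]

end MittagLeffler

/-! ### The Laplace transform and its inversion -/

section LaplaceTransform

variable {E : Type*} [NormedAddCommGroup E] [NormedSpace ℂ E]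

/-- The Laplace integral of `f` at `s` converges absolutely. -/
def LaplaceConvergent (f : ℝ → E) (s : ℂ) : Prop :=
  IntegrableOn (fun x : ℝ => Complex.exp (-(s * x)) • f x) (Set.Ioi 0)

/-- The one-sided Laplace transform `∫₀^∞ e^{-sx} f(x) dx`, equal to `0` where the integral does not
converge absolutely. -/
noncomputable def laplaceTransform (f : ℝ → E) (s : ℂ) : E :=
  ∫ x in Set.Ioi (0 : ℝ), Complex.exp (-(s * x)) • f x

theorem laplaceTransform_eq_sub (f : ℝ → E) (s s₀ : ℂ) :
    laplaceTransform f s =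
      laplaceTransform (fun x => Complex.exp (-(s₀ * x)) • f x) (s - s₀) := by
  refine integral_congr_ae (Eventually.of_forall fun x => ?_)
  dsimp only
  rw [smul_smul, ← Complex.exp_add]
  ring_nf

theorem mul_exp_neg_mul_le_inv {δ : ℝ} (hδ : 0 < δ) (x : ℝ) : x * Real.exp (-(δ * x)) ≤ δ⁻¹ := by
  have h : δ * x ≤ Real.exp (δ * x) := (lt_add_one _).le.trans (Real.add_one_le_exp _)
  rw [Real.exp_neg, ← div_eq_mul_inv, div_le_iff₀ (Real.exp_pos _), ← div_eq_inv_mul,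
    le_div_iff₀ hδ, mul_comm]
  exact h

theorem differentiableAt_laplaceTransform_of_integrableOn [CompleteSpace E] {f : ℝ → E}
    (hf : IntegrableOn f (Set.Ioi 0)) {s : ℂ} (hs : 0 < s.re) :
    DifferentiableAt ℂ (laplaceTransform f) s := by
  have hmeas (w : ℂ) : AEStronglyMeasurable (fun x : ℝ => Complex.exp (-(w * x)) • f x)
      (volume.restrict (Set.Ioi 0)) :=
    (Continuous.aestronglyMeasurable (by fun_prop)).smul hf.aestronglyMeasurable
  have hnhds : {w : ℂ | s.re / 2 < w.re} ∈ 𝓝 s :=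
    (isOpen_lt continuous_const Complex.continuous_re).mem_nhds (half_lt_self hs)
  have hnorm (w : ℂ) (x : ℝ) : ‖Complex.exp (-(w * x))‖ = Real.exp (-(w.re * x)) := by
    simp [Complex.norm_exp]
  refine (hasDerivAt_integral_of_dominated_loc_of_deriv_le (μ := volume.restrict (Set.Ioi (0 : ℝ)))
    (F' := fun w x => (-(x : ℂ)) • Complex.exp (-(w * x)) • f x)
    (bound := fun x => (s.re / 2)⁻¹ * ‖f x‖)
    hnhds (Eventually.of_forall hmeas) ?integrable ?meas ?bound (hf.norm.const_mul _)
    ?deriv).2.differentiableAt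
  case integrable =>
    refine hf.norm.mono' (hmeas s) ?_
    filter_upwards [ae_restrict_mem measurableSet_Ioi] with x hx
    rw [norm_smul, hnorm]
    exact mul_le_of_le_one_left (norm_nonneg _)
      (Real.exp_le_one_iff.2 (neg_nonpos.2 (mul_pos hs hx).le))
  case meas =>
    exact (Continuous.aestronglyMeasurable (by fun_prop)).smul (hmeas s)
  case bound =>
    filter_upwards [ae_restrict_mem measurableSet_Ioi] with x hx w hw
    have hx : 0 < x := hx
    have : s.re / 2 < w.re := hw
    rw [norm_smul, norm_smul, hnorm, norm_neg, Complex.norm_of_nonneg hx.le, ← mul_assoc]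
    gcongr
    exact le_trans (by gcongr) (mul_exp_neg_mul_le_inv (half_pos hs) x)
  case deriv =>
    refine Eventually.of_forall fun x w _ => ?_
    have hexp : HasDerivAt (fun w : ℂ => Complex.exp (-(w * x)))
        (Complex.exp (-(w * x)) * -(1 * x)) w := (((hasDerivAt_id w).mul_const _).neg).cexp
    refine (hexp.smul_const (f x)).congr_deriv ?_
    rw [smul_smul, one_mul, mul_comm]

theorem LaplaceConvergent.differentiableAt [CompleteSpace E] {f : ℝ → E} {s₀ s : ℂ}
    (hf : LaplaceConvergent f s₀) (hs : s₀.re < s.re) :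
    DifferentiableAt ℂ (laplaceTransform f) s := by
  rw [funext fun w => laplaceTransform_eq_sub f w s₀]
  refine (differentiableAt_laplaceTransform_of_integrableOn hf ?_).comp s (by fun_prop)
  simpa using hs

theorem laplaceTransform_eq_fourier (f : ℝ → E) (c ξ : ℝ) :
    laplaceTransform f (c + (2 * Real.pi * ξ : ℝ) * Complex.I) = FourierTransform.fourier
      ((Set.Ioi 0).indicator fun x : ℝ => Complex.exp (-(c * x)) • f x) ξ := by
  rw [Real.fourier_eq', laplaceTransform, ← integral_indicator measurableSet_Ioi]
  congr with x
  by_cases hx : x ∈ Set.Ioi (0 : ℝ)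
  · rw [Set.indicator_of_mem hx, Set.indicator_of_mem hx, smul_smul, ← Complex.exp_add]
    congr 2
    simp only [RCLike.inner_apply, conj_trivial]
    push_cast
    ring
  · rw [Set.indicator_of_notMem hx, Set.indicator_of_notMem hx, smul_zero]

theorem LaplaceConvergent.integral_exp_mul_I_smul_laplaceTransform [CompleteSpace E]
    {f : ℝ → E} {c t : ℝ} (hf : LaplaceConvergent f c)
    (hL : Integrable fun y : ℝ => laplaceTransform f (c + y * Complex.I)) (ht : 0 < t)
    (hft : ContinuousAt f t) :
    ∫ y : ℝ, Complex.exp (y * t * Complex.I) • laplaceTransform f (c + y * Complex.I) =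
      (2 * Real.pi) • Complex.exp (-(c * t)) • f t := by
  set h : ℝ → E := (Set.Ioi 0).indicator fun x : ℝ => Complex.exp (-(c * x)) • f x with hh
  have hfourier (ξ : ℝ) := laplaceTransform_eq_fourier f c ξ
  have hint : Integrable (FourierTransform.fourier h) :=
    (hL.comp_mul_left' (R := 2 * Real.pi) (by positivity)).congr
      (Eventually.of_forall fun ξ => hfourier ξ)
  have hcont : ContinuousAt h t := by
    refine ContinuousAt.congr (f := fun x : ℝ => Complex.exp (-(c * x)) • f x) (by fun_prop) ?_
    filter_upwards [Ioi_mem_nhds ht] with x hx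
    rw [hh, Set.indicator_of_mem (Set.mem_Ioi.2 hx)]
  have hinv := (hf.integrable_indicator measurableSet_Ioi).fourierInv_fourier_eq hint hcont
  rw [Real.fourierInv_eq', Set.indicator_of_mem (Set.mem_Ioi.2 ht)] at hinv
  rw [← inv_smul_eq_iff₀ (by positivity), ← abs_of_pos (inv_pos.2 Real.two_pi_pos),
    ← Measure.integral_comp_mul_left (fun y : ℝ => Complex.exp (y * t * Complex.I) •
      laplaceTransform f (c + y * Complex.I)), ← hinv]
  congr with ξ
  rw [hfourier, RCLike.inner_apply, conj_trivial]
  congr 3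
  push_cast
  ring

theorem LaplaceConvergent.integral_exp_smul_laplaceTransform [CompleteSpace E]
    {f : ℝ → E} {c t : ℝ} (hf : LaplaceConvergent f c)
    (hL : Integrable fun y : ℝ => laplaceTransform f (c + y * Complex.I)) (ht : 0 < t)
    (hft : ContinuousAt f t) :
    ∫ y : ℝ, Complex.exp ((c + y * Complex.I) * t) • laplaceTransform f (c + y * Complex.I) =
      (2 * Real.pi) • f t := by
  calc ∫ y : ℝ, Complex.exp ((c + y * Complex.I) * t) • laplaceTransform f (c + y * Complex.I)
      = Complex.exp (c * t) • ∫ y : ℝ, Complex.exp (y * t * Complex.I) •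
          laplaceTransform f (c + y * Complex.I) := by
        rw [← integral_smul]
        congr with y
        rw [smul_smul, ← Complex.exp_add]
        ring_nf
    _ = (2 * Real.pi) • f t := by
        rw [hf.integral_exp_mul_I_smul_laplaceTransform hL ht hft, smul_comm, smul_smul,
          ← Complex.exp_add, add_neg_cancel, Complex.exp_zero, one_smul]

end LaplaceTransform

section LaplaceTransformPower

variable {E : Type*} [NormedAddCommGroup E] [NormedSpace ℂ E] {r : ℝ} {s : ℂ}

theorem norm_exp_neg_mul_smul_rpow_smul (r : ℝ) (s : ℂ) (v : E) {x : ℝ} (hx : 0 < x) :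
    ‖Complex.exp (-(s * x)) • x ^ r • v‖ = x ^ r * Real.exp (-s.re * x ^ (1 : ℝ)) * ‖v‖ := by
  rw [norm_smul, norm_smul, Complex.norm_exp, Real.norm_of_nonneg (by positivity), Real.rpow_one,
    Complex.neg_re, Complex.re_mul_ofReal, neg_mul]
  ring

theorem laplaceConvergent_rpow_smul (hr : -1 < r) (hs : 0 < s.re) (v : E) :
    LaplaceConvergent (fun x => x ^ r • v) s := by
  refine ((integrableOn_rpow_mul_exp_neg_mul_rpow hr one_pos hs).mul_const ‖v‖).mono' ?_ ?_
  · exact Measurable.aestronglyMeasurable (by fun_prop) |>.smul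
      ((Measurable.aestronglyMeasurable (by fun_prop)).smul_const v)
  · filter_upwards [ae_restrict_mem measurableSet_Ioi] with x hx
    exact (norm_exp_neg_mul_smul_rpow_smul r s v hx).le

theorem integral_norm_exp_neg_mul_smul_rpow_smul (hr : -1 < r) (hs : 0 < s.re) (v : E) :
    ∫ x in Set.Ioi (0 : ℝ), ‖Complex.exp (-(s * x)) • x ^ r • v‖ =
      Real.Gamma (r + 1) * s.re ^ (-(r + 1)) * ‖v‖ := by
  have hΓ := Real.integral_rpow_mul_exp_neg_mul_Ioi (by linarith : 0 < r + 1) hs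
  rw [add_sub_cancel_right, one_div, Real.inv_rpow hs.le, ← Real.rpow_neg hs.le, mul_comm] at hΓ
  rw [← hΓ, ← integral_mul_const]
  refine setIntegral_congr_fun measurableSet_Ioi fun x hx => ?_
  rw [norm_exp_neg_mul_smul_rpow_smul r s v hx, Real.rpow_one, neg_mul]

theorem eqOn_re_pos_of_eq_ofReal [CompleteSpace E] {f g : ℂ → E}
    (hf : DifferentiableOn ℂ f {z | 0 < z.re}) (hg : DifferentiableOn ℂ g {z | 0 < z.re})
    (h : ∀ x : ℝ, 0 < x → f x = g x) : Set.EqOn f g {z | 0 < z.re} := by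
  have hopen : IsOpen {z : ℂ | 0 < z.re} := isOpen_lt continuous_const Complex.continuous_re
  refine (hf.analyticOnNhd hopen).eqOn_of_preconnected_of_frequently_eq (hg.analyticOnNhd hopen)
    (convex_halfSpace_re_gt 0).isPreconnected (z₀ := ((1 : ℝ) : ℂ)) (by simp) ?_
  have htendsto : Tendsto ((↑) : ℝ → ℂ) (𝓝[>] 1) (𝓝[≠] ((1 : ℝ) : ℂ)) := by
    refine tendsto_nhdsWithin_of_tendsto_nhds_of_eventually_within _
      (Complex.continuous_ofReal.continuousAt.tendsto.mono_left nhdsWithin_le_nhds) ?_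
    filter_upwards [self_mem_nhdsWithin] with x hx
    exact Complex.ofReal_injective.ne (ne_of_gt hx)
  refine htendsto.frequently (Eventually.frequently ?_)
  filter_upwards [self_mem_nhdsWithin] with x hx using h x (one_pos.trans hx)

theorem laplaceTransform_rpow_ofReal (hr : -1 < r) {c : ℝ} (hc : 0 < c) :
    laplaceTransform (fun x : ℝ => x ^ r • (1 : ℂ)) c =
      Real.Gamma (r + 1) * (c : ℂ) ^ (-((r + 1 : ℝ) : ℂ)) := by
  have hΓ := Complex.integral_cpow_mul_exp_neg_mul_Ioi (a := (r + 1 : ℝ))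
    (by rw [Complex.ofReal_re]; linarith) hc
  rw [one_div, ← Complex.ofReal_inv, ← Complex.ofReal_cpow (by positivity), Real.inv_rpow hc.le,
    ← Real.rpow_neg hc.le, Complex.ofReal_cpow hc.le, Complex.ofReal_neg, Complex.Gamma_ofReal,
    mul_comm] at hΓ
  rw [← hΓ, laplaceTransform]
  refine setIntegral_congr_fun measurableSet_Ioi fun x hx => ?_
  have hpow : (x : ℂ) ^ (((r + 1 : ℝ) : ℂ) - 1) = ((x ^ r : ℝ) : ℂ) := by
    rw [Complex.ofReal_cpow (le_of_lt hx), Complex.ofReal_add, Complex.ofReal_one,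
      add_sub_cancel_right]
  rw [hpow, smul_eq_mul, Complex.real_smul, mul_one, mul_comm]

theorem laplaceTransform_rpow (hr : -1 < r) (hs : 0 < s.re) :
    laplaceTransform (fun x : ℝ => x ^ r • (1 : ℂ)) s =
      Real.Gamma (r + 1) * s ^ (-((r + 1 : ℝ) : ℂ)) := by
  refine eqOn_re_pos_of_eq_ofReal (f := laplaceTransform fun x : ℝ => x ^ r • (1 : ℂ))
    (g := fun s => Real.Gamma (r + 1) * s ^ (-((r + 1 : ℝ) : ℂ))) (fun z hz => ?_) (fun z hz => ?_)
    (fun c hc => laplaceTransform_rpow_ofReal hr hc) hs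
  · have hz : 0 < z.re := hz
    refine ((laplaceConvergent_rpow_smul hr (s := (z.re / 2 : ℝ)) ?_ 1).differentiableAt
      ?_).differentiableWithinAt
    · rw [Complex.ofReal_re]; positivity
    · rw [Complex.ofReal_re]; linarith
  · exact ((differentiableAt_id.cpow_const (Or.inl hz)).const_mul _).differentiableWithinAt

theorem laplaceTransform_rpow_smul [CompleteSpace E] (hr : -1 < r) (hs : 0 < s.re) (v : E) :
    laplaceTransform (fun x => x ^ r • v) s =
      ((Real.Gamma (r + 1) : ℂ) * s ^ (-((r + 1 : ℝ) : ℂ))) • v := by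
  rw [← laplaceTransform_rpow hr hs, laplaceTransform, laplaceTransform, ← integral_smul_const]
  simp only [Complex.real_smul, smul_eq_mul, mul_one, mul_smul, Complex.coe_smul]

theorem integrable_of_hasSum {X F : Type*} [MeasurableSpace X] {μ : Measure X}
    [NormedAddCommGroup F] {f : ℕ → X → F} {g : X → F} (hf : ∀ k, Integrable (f k) μ)
    (hsum : Summable fun k => ∫ x, ‖f k x‖ ∂μ) (hg : ∀ᵐ x ∂μ, HasSum (f · x) (g x)) :
    Integrable g μ := by
  have hmeas : AEStronglyMeasurable g μ := by
    refine aestronglyMeasurable_of_tendsto_ae atTop (f := fun n x => ∑ k ∈ Finset.range n, f k x)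
      (fun n => Finset.aestronglyMeasurable_fun_sum _ fun k _ => (hf k).aestronglyMeasurable) ?_
    filter_upwards [hg] with x hx using hx.tendsto_sum_nat
  refine ⟨hmeas, ?_⟩
  calc ∫⁻ x, ‖g x‖ₑ ∂μ ≤ ∫⁻ x, ∑' k, ‖f k x‖ₑ ∂μ := by
        refine lintegral_mono_ae ?_
        filter_upwards [hg] with x hx
        exact hx.tsum_eq ▸ enorm_tsum_le_tsum_enorm
    _ = ∑' k, ENNReal.ofReal (∫ x, ‖f k x‖ ∂μ) := by
        rw [lintegral_tsum fun k => (hf k).aestronglyMeasurable.enorm]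
        exact tsum_congr fun k => (ofReal_integral_norm_eq_lintegral_enorm (hf k)).symm
    _ < ⊤ := hsum.tsum_ofReal_lt_top

theorem laplaceConvergent_of_hasSum_rpow_smul {f : ℝ → E} {e : ℕ → ℝ} {v : ℕ → E}
    (he : ∀ k, -1 < e k) (hs : 0 < s.re)
    (hsum : Summable fun k => Real.Gamma (e k + 1) * s.re ^ (-(e k + 1)) * ‖v k‖)
    (hf : ∀ x : ℝ, 0 < x → HasSum (fun k => x ^ e k • v k) (f x)) : LaplaceConvergent f s := by
  refine integrable_of_hasSum (fun k => laplaceConvergent_rpow_smul (he k) hs (v k))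
    (hsum.congr fun k => (integral_norm_exp_neg_mul_smul_rpow_smul (he k) hs (v k)).symm) ?_
  filter_upwards [ae_restrict_mem measurableSet_Ioi] with x hx using (hf x hx).const_smul _

theorem hasSum_laplaceTransform_of_hasSum_rpow_smul [CompleteSpace E] {f : ℝ → E}
    {e : ℕ → ℝ} {v : ℕ → E} (he : ∀ k, -1 < e k) (hs : 0 < s.re)
    (hsum : Summable fun k => Real.Gamma (e k + 1) * s.re ^ (-(e k + 1)) * ‖v k‖)
    (hf : ∀ x : ℝ, 0 < x → HasSum (fun k => x ^ e k • v k) (f x)) :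
    HasSum (fun k => ((Real.Gamma (e k + 1) : ℂ) * s ^ (-((e k + 1 : ℝ) : ℂ))) • v k)
      (laplaceTransform f s) := by
  have hint := hasSum_integral_of_summable_integral_norm
    (fun k => laplaceConvergent_rpow_smul (he k) hs (v k))
    (hsum.congr fun k => (integral_norm_exp_neg_mul_smul_rpow_smul (he k) hs (v k)).symm)
  have hterm : laplaceTransform f s = ∫ x in Set.Ioi (0 : ℝ),
      ∑' k, Complex.exp (-(s * x)) • x ^ e k • v k :=
    setIntegral_congr_fun measurableSet_Ioi fun x hx => ((hf x hx).const_smul _).tsum_eq.symm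
  rw [hterm]
  exact hint.congr_fun fun k => laplaceTransform_rpow_smul (he k) hs (v k) |>.symm

end LaplaceTransformPower

/-! ### The Laplace transform of the Mittag-Leffler function -/

section LaplaceMittagLeffler

variable {𝔸 : Type*} [NormedRing 𝔸] [NormedAlgebra ℂ 𝔸] {α : ℝ} {a : 𝔸} {s : ℂ}

/-- The negative derivative of `s ↦ R(s^α)`, where `R` is the resolvent of `a`. It is the Laplace
transform of `x ↦ x^α E_{α,α}(x^α a)` and, unlike the transform `R(s^α)` of
`x ↦ x^{α-1} E_{α,α}(x^α a)`, absolutely integrable on vertical lines. -/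
noncomputable def negDerivResolventCpow (α : ℝ) (a : 𝔸) (s : ℂ) : 𝔸 :=
  ((α : ℂ) * s ^ ((α : ℂ) - 1)) • resolvent a (s ^ (α : ℂ)) ^ 2

theorem resolvent_eq_inv_smul_inverse (a : 𝔸) {z : ℂ} (hz : z ≠ 0) :
    resolvent a z = z⁻¹ • Ring.inverse (1 - z⁻¹ • a) := by
  rw [eq_inv_smul_iff₀ hz]
  simpa [resolvent, Units.smul_def] using
    spectrum.units_smul_resolvent_self (r := Units.mk0 z hz) (a := a)

theorem hasSum_negDerivResolventCpow [CompleteSpace 𝔸] (hs : s ≠ 0) (ha : ‖a‖ < ‖s‖ ^ α) :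
    HasSum (fun k : ℕ => (((α * k + α : ℝ) : ℂ) * s ^ (-((α * k + α + 1 : ℝ) : ℂ))) • a ^ k)
      (negDerivResolventCpow α a s) := by
  set z := s ^ (α : ℂ) with hz
  have hz0 : z ≠ 0 := (Complex.cpow_ne_zero_iff).2 (Or.inl hs)
  have hnorm : ‖z⁻¹ • a‖ < 1 := by
    have : 0 < ‖s‖ ^ α := by positivity
    rw [norm_smul, norm_inv, hz, Complex.norm_cpow_real, inv_mul_lt_iff₀ this, mul_one]
    exact ha
  have hgeom := (hasSum_choose_mul_geometric_of_norm_lt_one' 1 hnorm).const_smul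
    ((α : ℂ) * s ^ ((α : ℂ) - 1) * z⁻¹ ^ 2)
  rw [negDerivResolventCpow, ← hz, resolvent_eq_inv_smul_inverse a hz0, smul_pow, smul_smul]
  refine hgeom.congr_fun fun k => ?_
  have hpow : s ^ (-((α * k + α + 1 : ℝ) : ℂ)) = s ^ ((α : ℂ) - 1) * z⁻¹ ^ 2 * z⁻¹ ^ k := by
    rw [mul_assoc, ← pow_add, hz, ← Complex.cpow_neg, ← Complex.cpow_mul_nat,
      ← Complex.cpow_add _ _ hs]
    congr 1
    push_cast
    ring
  rw [Nat.choose_one_right, smul_pow, ← nsmul_eq_mul, ← Nat.cast_smul_eq_nsmul ℂ, smul_smul,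
    smul_smul, hpow]
  congr 1
  push_cast
  ring

theorem Gamma_add_one_mul_inv_Gamma {b : ℝ} (hb : 0 < b) :
    Real.Gamma (b + 1) * (Real.Gamma b)⁻¹ = b := by
  rw [Real.Gamma_add_one hb.ne', mul_assoc, mul_inv_cancel₀ (Real.Gamma_pos_of_pos hb).ne', mul_one]

theorem summable_Gamma_mul_rpow_neg_mul_norm_pow (hα : 0 < α) {c : ℝ} (hc : 0 < c)
    (ha : ‖a‖ < c ^ α) :
    Summable fun k : ℕ => Real.Gamma (α * k + α + 1) * c ^ (-(α * k + α + 1)) *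
      ‖(Real.Gamma (α * k + α))⁻¹ • a ^ k‖ := by
  have hscalar := (hasSum_negDerivResolventCpow (a := (‖a‖ : ℂ)) (s := c)
    (Complex.ofReal_ne_zero.2 hc.ne') (α := α)
    (by rwa [Complex.norm_real, norm_norm, Complex.norm_of_nonneg hc.le])).summable.norm
  refine Summable.of_nonneg_of_le (fun k => ?_) (fun k => ?_)
    (hscalar.mul_left (1 + ‖(1 : 𝔸)‖))
  · have := Real.Gamma_pos_of_pos (by positivity : 0 < α * k + α + 1)
    positivity
  have hk : 0 < α * k + α := by positivity
  have hΓ := Gamma_add_one_mul_inv_Gamma hk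
  have hΓ0 := Real.Gamma_pos_of_pos hk
  calc Real.Gamma (α * k + α + 1) * c ^ (-(α * k + α + 1)) * ‖(Real.Gamma (α * k + α))⁻¹ • a ^ k‖
      = (α * k + α) * c ^ (-(α * k + α + 1)) * ‖a ^ k‖ := by
        rw [norm_smul, Real.norm_of_nonneg (inv_pos.2 hΓ0).le]
        linear_combination (c ^ (-(α * k + α + 1)) * ‖a ^ k‖) * hΓ
    _ ≤ (α * k + α) * c ^ (-(α * k + α + 1)) * ((1 + ‖(1 : 𝔸)‖) * ‖a‖ ^ k) := by
        gcongr
        exact norm_pow_le_one_add_norm_one_mul a k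
    _ = _ := by
        rw [norm_smul, norm_mul, Complex.norm_of_nonneg hk.le, norm_pow, Complex.norm_real,
          norm_norm, ← Complex.ofReal_neg, Complex.norm_cpow_real, Complex.norm_of_nonneg hc.le]
        ring

variable [CompleteSpace 𝔸]

theorem hasSum_rpow_smul_mittagLeffler (hα : 0 < α) (a : 𝔸) {x : ℝ} (hx : 0 < x) :
    HasSum (fun k : ℕ => x ^ (α * k + α) • (Real.Gamma (α * k + α))⁻¹ • a ^ k)
      (x ^ α • mittagLeffler α α (x ^ α • a)) := by
  refine ((hasSum_mittagLeffler hα α (x ^ α • a)).const_smul (x ^ α)).congr_fun fun k => ?_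
  rw [smul_pow, smul_smul, smul_smul, smul_smul, Real.rpow_add hx, Real.rpow_mul_natCast hx.le]
  congr 1
  ring

theorem laplaceConvergent_mittagLeffler (hα : 0 < α) (hs : 0 < s.re) (ha : ‖a‖ < s.re ^ α) :
    LaplaceConvergent (fun x : ℝ => x ^ α • mittagLeffler α α (x ^ α • a)) s :=
  laplaceConvergent_of_hasSum_rpow_smul (fun k => neg_one_lt_zero.trans (by positivity)) hs
    (summable_Gamma_mul_rpow_neg_mul_norm_pow hα hs ha)
    fun _ hx => hasSum_rpow_smul_mittagLeffler hα a hx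

theorem laplaceTransform_mittagLeffler (hα : 0 < α) (hs : 0 < s.re) (ha : ‖a‖ < s.re ^ α) :
    laplaceTransform (fun x : ℝ => x ^ α • mittagLeffler α α (x ^ α • a)) s =
      negDerivResolventCpow α a s := by
  have hs0 : s ≠ 0 := fun h => by simp [h] at hs
  have hseries := hasSum_laplaceTransform_of_hasSum_rpow_smul (e := fun k : ℕ => α * k + α)
    (v := fun k => (Real.Gamma (α * k + α))⁻¹ • a ^ k)
    (fun k => neg_one_lt_zero.trans (by positivity)) hs
    (summable_Gamma_mul_rpow_neg_mul_norm_pow hα hs ha)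
    fun _ hx => hasSum_rpow_smul_mittagLeffler hα a hx
  have hnorm : ‖a‖ < ‖s‖ ^ α :=
    ha.trans_le (Real.rpow_le_rpow hs.le (Complex.re_le_norm s) hα.le)
  refine hseries.unique ((hasSum_negDerivResolventCpow hs0 hnorm).congr_fun fun k => ?_)
  have hk : 0 < α * k + α := by positivity
  rw [← Complex.coe_smul, smul_smul]
  congr 1
  rw [mul_right_comm, ← Complex.ofReal_mul, Gamma_add_one_mul_inv_Gamma hk]

end LaplaceMittagLeffler

/-! ### Integrals along vertical lines -/

section VerticalLine

variable {E : Type*} [NormedAddCommGroup E] {H : ℂ → E} {B : ℝ → ℝ} {c d : ℝ}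

theorem integrable_comp_abs {f : ℝ → E} (hf : IntegrableOn f (Set.Ioi 0)) :
    Integrable fun x => f |x| := by
  have hpos : IntegrableOn (fun x => f |x|) (Set.Ioi 0) :=
    hf.congr_fun (fun x hx => by rw [abs_of_pos hx]) measurableSet_Ioi
  have hneg : IntegrableOn (fun x => f |x|) (Set.Iic 0) := by
    rw [integrableOn_Iic_iff_integrableOn_Iio]
    simpa using hpos.comp_neg
  rw [← integrableOn_univ, ← Set.Iic_union_Ioi (a := (0 : ℝ))]
  exact hneg.union hpos

theorem ae_norm_verticalLine_le (hHB : ∀ y : ℝ, y ≠ 0 → ‖H (c + y * Complex.I)‖ ≤ B |y|) :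
    ∀ᵐ y : ℝ, ‖H (c + y * Complex.I)‖ ≤ B |y| := by
  filter_upwards [Measure.ae_ne volume (0 : ℝ)] with y hy using hHB y hy

theorem integrable_verticalLine (hH : ∀ s : ℂ, s.re = c → ContinuousAt H s)
    (hB : IntegrableOn B (Set.Ioi 0))
    (hHB : ∀ y : ℝ, y ≠ 0 → ‖H (c + y * Complex.I)‖ ≤ B |y|) :
    Integrable fun y : ℝ => H (c + y * Complex.I) := by
  have hcont : Continuous fun y : ℝ => H (c + y * Complex.I) :=
    continuous_iff_continuousAt.2 fun y => ContinuousAt.comp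
      (f := fun y : ℝ => (c + y * Complex.I : ℂ)) (hH _ (by simp)) (by fun_prop)
  exact (integrable_comp_abs hB).mono' hcont.aestronglyMeasurable (ae_norm_verticalLine_le hHB)

variable [NormedSpace ℂ E]

theorem tendsto_integral_horizontalSegment (hcd : c ≤ d)
    (hHB : ∀ s : ℂ, s.re ∈ Set.Icc c d → s.im ≠ 0 → ‖H s‖ ≤ B |s.im|)
    (hB : Tendsto B atTop (𝓝 0)) {l : Filter ℝ} (hl : Tendsto (fun T => |T|) l atTop) :
    Tendsto (fun T : ℝ => ∫ x in c..d, H (x + T * Complex.I)) l (𝓝 0) := by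
  have hlim : Tendsto (fun T : ℝ => B |T| * |d - c|) l (𝓝 0) := by
    simpa using (hB.comp hl).mul_const |d - c|
  refine squeeze_zero_norm' ?_ hlim
  filter_upwards [hl.eventually_gt_atTop 0] with T hT
  refine intervalIntegral.norm_integral_le_of_norm_le_const fun x hx => ?_
  rw [Set.uIoc_of_le hcd] at hx
  simpa using hHB (x + T * Complex.I) (by simpa using ⟨hx.1.le, hx.2⟩) (by simpa using hT)

theorem integral_verticalLine_eq [CompleteSpace E] (hcd : c ≤ d)
    (hH : ∀ s : ℂ, s.re ∈ Set.Icc c d → DifferentiableAt ℂ H s)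
    (hBint : IntegrableOn B (Set.Ioi 0)) (hB : Tendsto B atTop (𝓝 0))
    (hHB : ∀ s : ℂ, s.re ∈ Set.Icc c d → s.im ≠ 0 → ‖H s‖ ≤ B |s.im|) :
    ∫ y : ℝ, H (c + y * Complex.I) = ∫ y : ℝ, H (d + y * Complex.I) := by
  have hvert (x : ℝ) (hx : x ∈ Set.Icc c d) :
      Tendsto (fun T : ℝ => ∫ y in (-T)..T, H (x + y * Complex.I)) atTop
        (𝓝 (∫ y : ℝ, H (x + y * Complex.I))) := by
    have hint : Integrable fun y : ℝ => H (x + y * Complex.I) :=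
      integrable_verticalLine (fun s hs => (hH s (by rwa [hs])).continuousAt) hBint
        fun y hy => by simpa using hHB (x + y * Complex.I) (by simpa using hx) (by simpa using hy)
    exact intervalIntegral_tendsto_integral hint tendsto_neg_atTop_atBot tendsto_id
  have htop := tendsto_integral_horizontalSegment hcd hHB hB tendsto_abs_atTop_atTop
  have hbot := (tendsto_integral_horizontalSegment hcd hHB hB tendsto_abs_atBot_atTop).comp
    tendsto_neg_atTop_atBot
  have hrect (T : ℝ) : (∫ x in c..d, H (x + (-T : ℝ) * Complex.I)) -
      (∫ x in c..d, H (x + T * Complex.I)) + Complex.I • (∫ y in (-T)..T, H (d + y * Complex.I)) -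
      Complex.I • (∫ y in (-T)..T, H (c + y * Complex.I)) = 0 :=
    Complex.integral_boundary_rect_eq_zero_of_differentiableOn H ⟨c, -T⟩ ⟨d, T⟩ fun s hs =>
      (hH s (by simpa [Set.uIcc_of_le hcd] using hs.1)).differentiableWithinAt
  have hlim := ((hbot.sub htop).add ((hvert d ⟨hcd, le_rfl⟩).const_smul Complex.I)).sub
    ((hvert c ⟨le_rfl, hcd⟩).const_smul Complex.I)
  have hzero := tendsto_nhds_unique (tendsto_const_nhds.congr fun T => (hrect T).symm) hlim
  rw [sub_zero, zero_add, ← smul_sub, eq_comm, smul_eq_zero] at hzero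
  exact (sub_eq_zero.1 (hzero.resolve_left Complex.I_ne_zero)).symm

end VerticalLine

/-! ### Boundedness of the Mittag-Leffler function -/

theorem abs_arg_cpow_le {s : ℂ} {α : ℝ} (hα : 0 ≤ α) (hα1 : α ≤ 1) (hs : 0 ≤ s.re) :
    |(s ^ (α : ℂ)).arg| ≤ α * Real.pi / 2 := by
  rcases eq_or_ne s 0 with rfl | hs0
  · rcases eq_or_ne α 0 with rfl | hα0
    · simp
    · rw [Complex.zero_cpow (by exact_mod_cast hα0), Complex.arg_zero, abs_zero]
      positivity
  have harg : |α * s.arg| ≤ α * Real.pi / 2 := by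
    rw [abs_mul, abs_of_nonneg hα, mul_div_assoc]
    exact mul_le_mul_of_nonneg_left (Complex.abs_arg_le_pi_div_two_iff.2 hs) hα
  have him : (Complex.log s * α).im = α * s.arg := by simp [Complex.log_im, mul_comm]
  have hpi : |α * s.arg| < Real.pi := by nlinarith [Real.pi_pos]
  rwa [Complex.cpow_def_of_ne_zero hs0, ← Complex.log_im, Complex.log_exp, him]
  · exact him ▸ (abs_lt.1 hpi).1
  · exact him ▸ (abs_lt.1 hpi).2.le

theorem exists_norm_le_of_isBigO_one {X E : Type*} [PseudoMetricSpace X] [ProperSpace X]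
    [SeminormedAddCommGroup E] {F : X → E} {S : Set X} (hS : IsClosed S) (hF : ContinuousOn F S)
    (hO : F =O[Bornology.cobounded X] fun _ => (1 : ℝ)) : ∃ C, ∀ x ∈ S, ‖F x‖ ≤ C := by
  obtain ⟨C, hC⟩ := hO.bound
  set K := {x | ‖F x‖ ≤ C * ‖(1 : ℝ)‖}ᶜ with hK_def
  have hK : Bornology.IsBounded K := Bornology.isBounded_def.2 (by rwa [hK_def, compl_compl])
  have hcomp : IsCompact (closure K ∩ S) :=
    (Metric.isCompact_of_isClosed_isBounded isClosed_closure hK.closure).inter_right hS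
  obtain ⟨D, hD⟩ := hcomp.exists_bound_of_continuousOn (hF.mono Set.inter_subset_right)
  refine ⟨max C D, fun x hx => ?_⟩
  by_cases hxK : x ∈ K
  · exact (hD x ⟨subset_closure hxK, hx⟩).trans (le_max_right _ _)
  · exact (by simpa [hK_def] using hxK : ‖F x‖ ≤ C).trans (le_max_left _ _)

section ResolventCpow

variable {𝔸 : Type*} [NormedRing 𝔸] [NormedAlgebra ℂ 𝔸] {α : ℝ} {a : 𝔸} {s : ℂ}

theorem cpow_mem_resolventSet (hα : 0 ≤ α) (hα1 : α ≤ 1)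
    (hspec : ∀ μ ∈ spectrum ℂ a, α * Real.pi / 2 < |Complex.arg μ|) (hs : 0 ≤ s.re) :
    s ^ (α : ℂ) ∈ resolventSet ℂ a := by
  by_contra h
  exact (hspec _ h).not_ge (abs_arg_cpow_le hα hα1 hs)

variable [CompleteSpace 𝔸]

theorem isBigO_resolvent_cpow (hα : 0 < α) (a : 𝔸) :
    (fun s : ℂ => (1 + ‖s‖ ^ α) • resolvent a (s ^ (α : ℂ))) =O[Bornology.cobounded ℂ]
      fun _ => (1 : ℝ) := by
  have hpow : Tendsto (fun s : ℂ => ‖s‖ ^ α) (Bornology.cobounded ℂ) atTop :=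
    (tendsto_rpow_atTop hα).comp tendsto_norm_cobounded_atTop
  have hcpow : Tendsto (fun s : ℂ => s ^ (α : ℂ)) (Bornology.cobounded ℂ)
      (Bornology.cobounded ℂ) := by
    rw [← tendsto_norm_atTop_iff_cobounded]
    simpa only [Complex.norm_cpow_real] using hpow
  obtain ⟨C, hC⟩ := ((spectrum.resolvent_isBigO_inv (𝕜 := ℂ) a).comp_tendsto hcpow).bound
  refine Asymptotics.IsBigO.of_bound (2 * C) ?_
  filter_upwards [hC, hpow.eventually_ge_atTop 1] with s hs hs1
  have : 0 < ‖s‖ ^ α := one_pos.trans_le hs1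
  simp only [Function.comp_apply, norm_inv, Complex.norm_cpow_real] at hs
  rw [norm_smul, norm_one, mul_one, Real.norm_of_nonneg (by positivity)]
  calc (1 + ‖s‖ ^ α) * ‖resolvent a (s ^ (α : ℂ))‖ ≤ (2 * ‖s‖ ^ α) * (C * (‖s‖ ^ α)⁻¹) := by
        gcongr
        linarith
    _ = 2 * C := by field_simp

theorem exists_one_add_mul_norm_resolvent_cpow_le (hα : 0 < α)
    (hres : ∀ s : ℂ, 0 ≤ s.re → s ^ (α : ℂ) ∈ resolventSet ℂ a) :
    ∃ M, ∀ s : ℂ, 0 ≤ s.re → (1 + ‖s‖ ^ α) * ‖resolvent a (s ^ (α : ℂ))‖ ≤ M := by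
  have hcont : ContinuousOn (fun s : ℂ => (1 + ‖s‖ ^ α) • resolvent a (s ^ (α : ℂ)))
      {s | 0 ≤ s.re} := fun s hs => by
    have hcpow : ContinuousAt (fun s : ℂ => s ^ (α : ℂ)) s :=
      Complex.continuousAt_cpow_const_of_re_pos (Or.inl hs) (by simpa using hα)
    have hresolvent := (spectrum.hasDerivAt_resolvent_const_left (hres s hs)).continuousAt
    exact ((continuousAt_const.add (continuousAt_id.norm.rpow_const (Or.inr hα.le))).smul
      (hresolvent.comp (f := fun s : ℂ => s ^ (α : ℂ)) hcpow)).continuousWithinAt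
  obtain ⟨M, hM⟩ := exists_norm_le_of_isBigO_one
    (isClosed_le continuous_const Complex.continuous_re) hcont (isBigO_resolvent_cpow hα a)
  refine ⟨M, fun s hs => ?_⟩
  simpa [norm_smul, abs_of_nonneg (by positivity : 0 ≤ 1 + ‖s‖ ^ α)] using hM s hs

theorem differentiableAt_negDerivResolventCpow
    (hres : s ^ (α : ℂ) ∈ resolventSet ℂ a) (hs : s ∈ Complex.slitPlane) :
    DifferentiableAt ℂ (negDerivResolventCpow α a) s := by
  have hresolvent : DifferentiableAt ℂ (fun s : ℂ => resolvent a (s ^ (α : ℂ))) s :=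
    (spectrum.hasDerivAt_resolvent_const_left hres).differentiableAt.comp
      (f := fun s : ℂ => s ^ (α : ℂ)) s (differentiableAt_id.cpow_const hs)
  exact ((differentiableAt_id.cpow_const hs).const_mul _).smul (hresolvent.pow 2)

end ResolventCpow

section ResolventWeight

variable {α : ℝ}

/-- The derivative of `y ↦ -(1 + y^α)⁻¹` on `(0, ∞)`, an integrable function which dominates
`negDerivResolventCpow` on every vertical line of the right half-plane. -/
noncomputable def resolventWeight (α y : ℝ) : ℝ :=
  α * y ^ (α - 1) / (1 + y ^ α) ^ 2

theorem resolventWeight_nonneg (hα : 0 ≤ α) {y : ℝ} (hy : 0 ≤ y) : 0 ≤ resolventWeight α y := by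
  unfold resolventWeight
  positivity

theorem integrableOn_resolventWeight (hα : 0 < α) :
    IntegrableOn (resolventWeight α) (Set.Ioi 0) := by
  have hderiv (y : ℝ) (hy : y ∈ Set.Ioi (0 : ℝ)) :
      HasDerivAt (fun y : ℝ => -(1 + y ^ α)⁻¹) (resolventWeight α y) y := by
    have hy : 0 < y := hy
    have h := (((Real.hasDerivAt_rpow_const (p := α) (Or.inl hy.ne')).const_add 1).fun_inv
      (by positivity)).fun_neg
    rwa [neg_div, neg_neg] at h
  have hcont : ContinuousWithinAt (fun y : ℝ => -(1 + y ^ α)⁻¹) (Set.Ici 0) 0 := by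
    refine ((continuousAt_const.add (Real.continuousAt_rpow_const 0 α (Or.inr hα.le))).inv₀
      ?_).neg.continuousWithinAt
    simp [Real.zero_rpow hα.ne']
  exact integrableOn_Ioi_deriv_of_nonneg hcont hderiv
    (fun y hy => resolventWeight_nonneg hα.le (le_of_lt hy))
    (tendsto_inv_atTop_zero.comp (tendsto_atTop_add_const_left _ 1 (tendsto_rpow_atTop hα))).neg

theorem tendsto_resolventWeight_atTop (hα : 0 ≤ α) (hα1 : α < 1) :
    Tendsto (resolventWeight α) atTop (𝓝 0) := by
  have hpow : Tendsto (fun y : ℝ => α * y ^ (α - 1)) atTop (𝓝 0) := by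
    simpa using (tendsto_rpow_neg_atTop (sub_pos.2 hα1)).const_mul α
  refine tendsto_of_tendsto_of_tendsto_of_le_of_le' tendsto_const_nhds hpow ?_ ?_
  · filter_upwards [eventually_ge_atTop 0] with y hy using resolventWeight_nonneg hα hy
  · filter_upwards [eventually_ge_atTop 0] with y hy
    refine div_le_self (by positivity) (one_le_pow₀ ?_)
    linarith [Real.rpow_nonneg hy α]

theorem norm_negDerivResolventCpow_le {𝔸 : Type*} [NormedRing 𝔸] [NormedAlgebra ℂ 𝔸] {a : 𝔸}
    {s : ℂ} {M : ℝ} (hα : 0 ≤ α) (hα1 : α ≤ 1)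
    (hM : (1 + ‖s‖ ^ α) * ‖resolvent a (s ^ (α : ℂ))‖ ≤ M) (hs : s.im ≠ 0) :
    ‖negDerivResolventCpow α a s‖ ≤ M ^ 2 * resolventWeight α |s.im| := by
  have him : 0 < |s.im| := abs_pos.2 hs
  have hle : |s.im| ≤ ‖s‖ := Complex.abs_im_le_norm s
  have hresolvent : ‖resolvent a (s ^ (α : ℂ))‖ ≤ M / (1 + |s.im| ^ α) := by
    rw [le_div_iff₀' (by positivity)]
    exact le_trans (by gcongr) hM
  have hcpow : ‖s ^ ((α : ℂ) - 1)‖ ≤ |s.im| ^ (α - 1) := by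
    rw [← Complex.ofReal_one, ← Complex.ofReal_sub, Complex.norm_cpow_real]
    exact Real.rpow_le_rpow_of_nonpos him hle (by linarith)
  rw [negDerivResolventCpow, norm_smul, norm_mul, Complex.norm_of_nonneg hα]
  calc α * ‖s ^ ((α : ℂ) - 1)‖ * ‖resolvent a (s ^ (α : ℂ)) ^ 2‖
      ≤ α * |s.im| ^ (α - 1) * (M / (1 + |s.im| ^ α)) ^ 2 := by
        gcongr
        exact (norm_pow_le' _ two_pos).trans (by gcongr)
    _ = M ^ 2 * resolventWeight α |s.im| := by rw [resolventWeight, div_pow]; ring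

end ResolventWeight

section Boundedness

variable {𝔸 : Type*} [NormedRing 𝔸] [NormedAlgebra ℂ 𝔸] {α : ℝ} {a : 𝔸} {M : ℝ}

theorem norm_exp_smul_negDerivResolventCpow_le {s : ℂ} {d t : ℝ} (hα : 0 ≤ α) (hα1 : α ≤ 1)
    (hM : (1 + ‖s‖ ^ α) * ‖resolvent a (s ^ (α : ℂ))‖ ≤ M) (hs : s.im ≠ 0) (ht : 0 ≤ t)
    (hsd : s.re ≤ d) :
    ‖Complex.exp (s * t) • negDerivResolventCpow α a s‖ ≤
      Real.exp (d * t) * (M ^ 2 * resolventWeight α |s.im|) := by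
  rw [norm_smul, Complex.norm_exp, Complex.re_mul_ofReal]
  gcongr
  exact norm_negDerivResolventCpow_le hα hα1 hM hs

variable [CompleteSpace 𝔸]

theorem integral_exp_smul_negDerivResolventCpow_of_norm_lt (hα : 0 < α) (hα1 : α ≤ 1)
    (hres : ∀ s : ℂ, 0 ≤ s.re → s ^ (α : ℂ) ∈ resolventSet ℂ a)
    (hM : ∀ s : ℂ, 0 ≤ s.re → (1 + ‖s‖ ^ α) * ‖resolvent a (s ^ (α : ℂ))‖ ≤ M)
    {d t : ℝ} (hd : 0 < d) (had : ‖a‖ < d ^ α) (ht : 0 < t) :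
    ∫ y : ℝ, Complex.exp ((d + y * Complex.I) * t) • negDerivResolventCpow α a (d + y * Complex.I) =
      (2 * Real.pi) • t ^ α • mittagLeffler α α (t ^ α • a) := by
  have hd' : 0 < (d : ℂ).re := by simpa
  have htransform (y : ℝ) :
      laplaceTransform (fun x : ℝ => x ^ α • mittagLeffler α α (x ^ α • a)) (d + y * Complex.I) =
        negDerivResolventCpow α a (d + y * Complex.I) :=
    laplaceTransform_mittagLeffler hα (by simpa) (by simpa)
  have hint : Integrable fun y : ℝ => negDerivResolventCpow α a (d + y * Complex.I) := by
    refine integrable_verticalLine (B := fun y => M ^ 2 * resolventWeight α y)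
      (fun s hs => ?_) ((integrableOn_resolventWeight hα).const_mul _) fun y hy => ?_
    · have hs0 : 0 < s.re := by rwa [hs]
      exact (differentiableAt_negDerivResolventCpow (hres s hs0.le) (Or.inl hs0)).continuousAt
    · simpa using norm_negDerivResolventCpow_le hα.le hα1
        (hM (d + y * Complex.I) (by simpa using hd.le)) (by simpa using hy)
  have hcont : Continuous fun x : ℝ => x ^ α • mittagLeffler α α (x ^ α • a) :=
    (Real.continuous_rpow_const hα.le).smul (continuous_mittagLeffler_rpow_smul hα α a)
  have hinv := (laplaceConvergent_mittagLeffler hα hd' had).integral_exp_smul_laplaceTransform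
    (by simpa only [htransform]) ht hcont.continuousAt
  simpa only [htransform] using hinv

theorem integral_exp_smul_negDerivResolventCpow (hα : 0 < α) (hα1 : α < 1)
    (hres : ∀ s : ℂ, 0 ≤ s.re → s ^ (α : ℂ) ∈ resolventSet ℂ a)
    (hM : ∀ s : ℂ, 0 ≤ s.re → (1 + ‖s‖ ^ α) * ‖resolvent a (s ^ (α : ℂ))‖ ≤ M)
    {c t : ℝ} (hc : 0 < c) (ht : 0 < t) :
    ∫ y : ℝ, Complex.exp ((c + y * Complex.I) * t) • negDerivResolventCpow α a (c + y * Complex.I) =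
      (2 * Real.pi) • t ^ α • mittagLeffler α α (t ^ α • a) := by
  obtain ⟨d, hcd, had⟩ : ∃ d, c ≤ d ∧ ‖a‖ < d ^ α :=
    ((eventually_ge_atTop c).and ((tendsto_rpow_atTop hα).eventually_gt_atTop ‖a‖)).exists
  rw [← integral_exp_smul_negDerivResolventCpow_of_norm_lt hα hα1.le hres hM (hc.trans_le hcd)
    had ht]
  refine integral_verticalLine_eq
    (H := fun s => Complex.exp (s * t) • negDerivResolventCpow α a s)
    (B := fun y => Real.exp (d * t) * (M ^ 2 * resolventWeight α y)) hcd (fun s hs => ?_)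
    (((integrableOn_resolventWeight hα).const_mul _).const_mul _)
    (by simpa using ((tendsto_resolventWeight_atTop hα.le hα1).const_mul (M ^ 2)).const_mul _)
    fun s hs him => ?_
  · have hs0 : 0 < s.re := hc.trans_le hs.1
    have hexp : DifferentiableAt ℂ (fun s : ℂ => Complex.exp (s * t)) s := by fun_prop
    exact hexp.smul (differentiableAt_negDerivResolventCpow (hres s hs0.le) (Or.inl hs0))
  · exact norm_exp_smul_negDerivResolventCpow_le hα.le hα1.le (hM s (hc.le.trans hs.1)) him ht.le
      hs.2

theorem norm_rpow_smul_mittagLeffler_le (hα : 0 < α) (hα1 : α < 1)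
    (hres : ∀ s : ℂ, 0 ≤ s.re → s ^ (α : ℂ) ∈ resolventSet ℂ a)
    (hM : ∀ s : ℂ, 0 ≤ s.re → (1 + ‖s‖ ^ α) * ‖resolvent a (s ^ (α : ℂ))‖ ≤ M)
    {t : ℝ} (ht : 0 < t) :
    2 * Real.pi * ‖t ^ α • mittagLeffler α α (t ^ α • a)‖ ≤
      Real.exp 1 * (M ^ 2 * ∫ y : ℝ, resolventWeight α |y|) := by
  have hπ : ‖(2 * Real.pi : ℝ)‖ = 2 * Real.pi := Real.norm_of_nonneg Real.two_pi_pos.le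
  rw [← hπ, ← norm_smul, ← integral_exp_smul_negDerivResolventCpow hα hα1 hres hM (inv_pos.2 ht) ht,
    ← integral_const_mul, ← integral_const_mul]
  refine norm_integral_le_of_norm_le
    (((integrable_comp_abs (integrableOn_resolventWeight hα)).const_mul _).const_mul _)
    (ae_norm_verticalLine_le (H := fun s => Complex.exp (s * t) • negDerivResolventCpow α a s)
      (B := fun y => Real.exp 1 * (M ^ 2 * resolventWeight α y)) fun y hy => ?_)
  have hre : 0 ≤ ((t⁻¹ : ℝ) + y * Complex.I : ℂ).re := by simpa using ht.le
  simpa [ht.ne'] using norm_exp_smul_negDerivResolventCpow_le (d := t⁻¹) hα.le hα1.le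
    (hM _ hre) (by simpa using hy) ht.le (by simp)

theorem exists_norm_mittagLeffler_rpow_smul_le (hα : 0 < α) (hα1 : α < 1)
    (hspec : ∀ μ ∈ spectrum ℂ a, α * Real.pi / 2 < |Complex.arg μ|) :
    ∃ C, ∀ t : ℝ, 0 ≤ t → ‖mittagLeffler α α (t ^ α • a)‖ ≤ C := by
  have hres (s : ℂ) (hs : 0 ≤ s.re) := cpow_mem_resolventSet hα.le hα1.le hspec hs
  obtain ⟨M, hM⟩ := exists_one_add_mul_norm_resolvent_cpow_le hα hres
  obtain ⟨C, hC⟩ := (isCompact_Icc (a := (0 : ℝ)) (b := 1)).exists_bound_of_continuousOn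
    (continuous_mittagLeffler_rpow_smul hα α a).continuousOn
  refine ⟨max C ((2 * Real.pi)⁻¹ * (Real.exp 1 * (M ^ 2 * ∫ y : ℝ, resolventWeight α |y|))),
    fun t ht => ?_⟩
  rcases le_total t 1 with ht1 | ht1
  · exact (hC t ⟨ht, ht1⟩).trans (le_max_left _ _)
  refine le_max_of_le_right ((le_inv_mul_iff₀ Real.two_pi_pos).2 ?_)
  refine le_trans ?_ (norm_rpow_smul_mittagLeffler_le hα hα1 hres hM (one_pos.trans_le ht1))
  rw [norm_smul, Real.norm_of_nonneg (by positivity)]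
  gcongr
  exact le_mul_of_one_le_left (norm_nonneg _) (Real.one_le_rpow ht1 hα.le)

end Boundedness

section Matrix

attribute [local instance] Matrix.linftyOpNormedAlgebra

theorem continuous_matrix_mittagLeffler_rpow_smul {n : Type*} [Fintype n] [DecidableEq n] {α : ℝ}
    (hα : 0 < α) (β : ℝ) (A : Matrix n n ℝ) :
    Continuous fun t : ℝ => mittagLeffler α β (t ^ α • A) :=
  have : CompleteSpace (Matrix n n ℝ) := FiniteDimensional.complete ℝ _
  continuous_mittagLeffler_rpow_smul hα β A

theorem linftyOpNorm_map_algebraMap {n : Type*} [Fintype n] (B : Matrix n n ℝ) :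
    ‖B.map (algebraMap ℝ ℂ)‖ = ‖B‖ := by
  simp [Matrix.linfty_opNorm_def]

theorem exists_norm_matrix_mittagLeffler_rpow_smul_le {n : Type*} [Fintype n] [DecidableEq n]
    {α : ℝ} (hα : 0 < α) (hα1 : α < 1) {A : Matrix n n ℝ}
    (hspec : ∀ μ ∈ spectrum ℂ (A.map (algebraMap ℝ ℂ)), α * Real.pi / 2 < |Complex.arg μ|) :
    ∃ C, ∀ t : ℝ, 0 ≤ t → ‖mittagLeffler α α (t ^ α • A)‖ ≤ C := by
  have : CompleteSpace (Matrix n n ℂ) := FiniteDimensional.complete ℂ _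
  have : CompleteSpace (Matrix n n ℝ) := FiniteDimensional.complete ℝ _
  obtain ⟨C, hC⟩ := exists_norm_mittagLeffler_rpow_smul_le hα hα1 hspec
  have hcont : Continuous ((algebraMap ℝ ℂ).mapMatrix (m := n)) :=
    continuous_id.matrix_map Complex.continuous_ofReal
  refine ⟨C, fun t ht => ?_⟩
  rw [← linftyOpNorm_map_algebraMap]
  refine le_of_eq_of_le (congrArg _ ?_) (hC t ht)
  exact (map_mittagLeffler hα α _ hcont _).trans (congrArg _ (map_real_smul _ hcont _ _))

end Matrix

/-! ### Weighted Abel integrals -/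

section WeightedAbelIntegral

open scoped NNReal

theorem intervalIntegrable_one_sub_rpow_mul_rpow {α β : ℝ} (hα : 0 < α) (hβ : 0 < β) :
    IntervalIntegrable (fun σ : ℝ => (1 - σ) ^ (α - 1) * σ ^ (β - 1)) volume 0 1 := by
  have hbeta := (Complex.betaIntegral_convergent (u := β) (v := α) (by simpa) (by simpa)).norm
  refine hbeta.congr_uIoo fun σ hσ => ?_
  rw [Set.uIoo_of_le zero_le_one] at hσ
  have hsub : (1 : ℂ) - σ = ((1 - σ : ℝ) : ℂ) := by push_cast; ring
  simp only [norm_mul]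
  rw [hsub, Complex.norm_cpow_eq_rpow_re_of_pos hσ.1,
    Complex.norm_cpow_eq_rpow_re_of_pos (sub_pos.2 hσ.2), mul_comm]
  simp

theorem continuous_intervalIntegral_smul {X E : Type*} [TopologicalSpace X]
    [FirstCountableTopology X] [LocallyCompactSpace X] [NormedAddCommGroup E] [NormedSpace ℝ E]
    {a b : ℝ} {w : ℝ → ℝ} (hw : IntervalIntegrable w volume a b) {G : X → ℝ → E}
    (hG : Continuous (Function.uncurry G)) :
    Continuous fun x => ∫ σ in a..b, w σ • G x σ := by
  refine continuous_iff_continuousAt.2 fun x₀ => ?_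
  obtain ⟨N, hN, hx₀⟩ := exists_compact_mem_nhds x₀
  obtain ⟨C, hC⟩ := (hN.prod isCompact_uIcc).exists_bound_of_continuousOn
    (s := N ×ˢ Set.uIcc a b) hG.continuousOn
  refine intervalIntegral.continuousAt_of_dominated_interval (bound := fun σ => ‖w σ‖ * C)
    (Eventually.of_forall fun x => ?_) ?_ (hw.norm.mul_const C) (Eventually.of_forall fun σ _ => ?_)
  · have hslice : Continuous (G x) := hG.comp (.prodMk_right x)
    exact (hw.smul_continuousOn hslice.continuousOn).def'.aestronglyMeasurable
  · filter_upwards [hx₀] with x hx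
    refine Eventually.of_forall fun σ hσ => ?_
    rw [norm_smul]
    gcongr
    exact hC (x, σ) ⟨hx, Set.uIoc_subset_uIcc hσ⟩
  · have hslice : Continuous fun x => G x σ := hG.comp (.prodMk_left σ)
    exact hslice.continuousAt.const_smul (w σ)

variable {E : Type*} [NormedAddCommGroup E] [NormedSpace ℝ E] {α β : ℝ} {F : ℝ≥0 → ℝ≥0 → E}

/-- `t^{1-α} ∫₀ᵗ (t - τ)^{α-1} τ^{β-1} F(t, τ) dτ`: an Abel integral of a function with a
singularity of order `β - 1` at `0`, multiplied by the weight of the space `C⁰_{1-α}`. -/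
noncomputable def weightedAbelIntegral (α β : ℝ) (F : ℝ≥0 → ℝ≥0 → E) (t : ℝ≥0) : E :=
  (t : ℝ) ^ (1 - α) •
    ∫ τ in (0 : ℝ)..t, ((t - τ) ^ (α - 1) * τ ^ (β - 1)) • F t τ.toNNReal

theorem weightedAbelIntegral_eq_integral_unitInterval (hβ : 0 < β)
    (F : ℝ≥0 → ℝ≥0 → E) (t : ℝ≥0) :
    weightedAbelIntegral α β F t = (t : ℝ) ^ β •
      ∫ σ in (0 : ℝ)..1, ((1 - σ) ^ (α - 1) * σ ^ (β - 1)) • F t (t * σ.toNNReal) := by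
  rcases eq_zero_or_pos t with rfl | ht
  · simp [weightedAbelIntegral, Real.zero_rpow hβ.ne']
  have ht : (0 : ℝ) < t := ht
  have hsubst := intervalIntegral.smul_integral_comp_mul_left (a := 0) (b := 1)
    (fun τ : ℝ => ((t - τ) ^ (α - 1) * τ ^ (β - 1)) • F t τ.toNNReal) t
  rw [mul_zero, mul_one] at hsubst
  have hpow : (t : ℝ) ^ β = t ^ (1 - α) * (t * (t ^ (α - 1) * t ^ (β - 1))) := by
    rw [Real.rpow_sub ht 1, Real.rpow_sub ht α, Real.rpow_sub ht β, Real.rpow_one]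
    field_simp
  rw [weightedAbelIntegral, ← hsubst, hpow, ← smul_smul, ← smul_smul (t : ℝ),
    ← intervalIntegral.integral_smul ((t : ℝ) ^ (α - 1) * (t : ℝ) ^ (β - 1))]
  congr 2
  refine intervalIntegral.integral_congr fun σ hσ => ?_
  rw [Set.uIcc_of_le zero_le_one] at hσ
  have hfactor : (t : ℝ) - t * σ = t * (1 - σ) := by ring
  rw [smul_smul, hfactor, Real.mul_rpow ht.le (sub_nonneg.2 hσ.2), Real.mul_rpow ht.le hσ.1,
    Real.toNNReal_mul ht.le, Real.toNNReal_coe]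
  congr 1
  ring

theorem continuous_weightedAbelIntegral (hα : 0 < α) (hβ : 0 < β)
    (hF : Continuous (Function.uncurry F)) : Continuous (weightedAbelIntegral α β F) := by
  have hG : Continuous (Function.uncurry fun (t : ℝ≥0) (σ : ℝ) => F t (t * σ.toNNReal)) :=
    hF.comp (f := fun p : ℝ≥0 × ℝ => (p.1, p.1 * p.2.toNNReal)) (by fun_prop)
  rw [funext (weightedAbelIntegral_eq_integral_unitInterval hβ F)]
  exact ((Real.continuous_rpow_const hβ.le).comp NNReal.continuous_coe).smul
    (continuous_intervalIntegral_smul (intervalIntegrable_one_sub_rpow_mul_rpow hα hβ) hG)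

theorem intervalIntegrable_betaKernel_smul (hα : 0 < α) (hβ : 0 < β)
    (hF : Continuous (Function.uncurry F)) (t : ℝ≥0) :
    IntervalIntegrable (fun σ : ℝ => ((1 - σ) ^ (α - 1) * σ ^ (β - 1)) • F t (t * σ.toNNReal))
      volume 0 1 := by
  have hslice : Continuous fun σ : ℝ => F t (t * σ.toNNReal) := hF.comp
    (f := fun σ : ℝ => (t, t * σ.toNNReal)) (by fun_prop)
  exact (intervalIntegrable_one_sub_rpow_mul_rpow hα hβ).smul_continuousOn hslice.continuousOn

theorem norm_weightedAbelIntegral_le (α β : ℝ) (F : ℝ≥0 → ℝ≥0 → E) (t : ℝ≥0) :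
    ‖weightedAbelIntegral α β F t‖ ≤ weightedAbelIntegral α β (fun t τ => ‖F t τ‖) t := by
  rw [weightedAbelIntegral, norm_smul, Real.norm_of_nonneg (by positivity), weightedAbelIntegral,
    smul_eq_mul]
  gcongr
  refine (intervalIntegral.norm_integral_le_integral_norm t.coe_nonneg).trans_eq
    (intervalIntegral.integral_congr fun τ hτ => ?_)
  rw [Set.uIcc_of_le t.coe_nonneg] at hτ
  rw [norm_smul, smul_eq_mul, Real.norm_of_nonneg
    (mul_nonneg (Real.rpow_nonneg (sub_nonneg.2 hτ.2) _) (Real.rpow_nonneg hτ.1 _))]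

theorem weightedAbelIntegral_add (hα : 0 < α) (hβ : 0 < β) {F₁ F₂ : ℝ≥0 → ℝ≥0 → E}
    (hF₁ : Continuous (Function.uncurry F₁)) (hF₂ : Continuous (Function.uncurry F₂)) (t : ℝ≥0) :
    weightedAbelIntegral α β (fun t τ => F₁ t τ + F₂ t τ) t =
      weightedAbelIntegral α β F₁ t + weightedAbelIntegral α β F₂ t := by
  simp only [weightedAbelIntegral_eq_integral_unitInterval hβ]
  rw [← smul_add, ← intervalIntegral.integral_add
    (intervalIntegrable_betaKernel_smul hα hβ hF₁ t)
    (intervalIntegrable_betaKernel_smul hα hβ hF₂ t)]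
  simp only [smul_add]

theorem weightedAbelIntegral_const_smul (c : ℝ) (F : ℝ≥0 → ℝ≥0 → E) (t : ℝ≥0) :
    weightedAbelIntegral α β (fun t τ => c • F t τ) t = c • weightedAbelIntegral α β F t := by
  simp only [weightedAbelIntegral, smul_comm _ c, intervalIntegral.integral_smul]

theorem weightedAbelIntegral_mono (hα : 0 < α) (hβ : 0 < β) {F₁ F₂ : ℝ≥0 → ℝ≥0 → ℝ}
    (hF₁ : Continuous (Function.uncurry F₁)) (hF₂ : Continuous (Function.uncurry F₂))
    (hle : ∀ t τ, F₁ t τ ≤ F₂ t τ) (t : ℝ≥0) :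
    weightedAbelIntegral α β F₁ t ≤ weightedAbelIntegral α β F₂ t := by
  simp only [weightedAbelIntegral_eq_integral_unitInterval hβ, smul_eq_mul]
  gcongr
  refine intervalIntegral.integral_mono_on zero_le_one
    (intervalIntegrable_betaKernel_smul hα hβ hF₁ t)
    (intervalIntegrable_betaKernel_smul hα hβ hF₂ t) fun σ hσ => ?_
  exact smul_le_smul_of_nonneg_left (hle _ _)
    (mul_nonneg (Real.rpow_nonneg (sub_nonneg.2 hσ.2) _) (Real.rpow_nonneg hσ.1 _))

end WeightedAbelIntegral

/-! ### Volterra equations with a weakly singular kernel -/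

section Volterra

open scoped NNReal BoundedContinuousFunction

theorem existsUnique_eq_add_apply_of_opNorm_lt_one {X : Type*} [NormedAddCommGroup X]
    [NormedSpace ℝ X] [CompleteSpace X] {T : X →L[ℝ] X} (hT : ‖T‖ < 1) (c : X) :
    ∃! y, y = c + T y := by
  have hbij := ContinuousLinearMap.isUnit_iff_bijective.1 (isUnit_one_sub_of_norm_lt_one hT)
  simpa [sub_eq_iff_eq_add] using hbij.existsUnique c

variable {E F : Type*} [NormedAddCommGroup E] [NormedSpace ℝ E] [NormedAddCommGroup F]
  [NormedSpace ℝ F] {α β q : ℝ} {k : ℝ≥0 → ℝ≥0 → E →L[ℝ] F}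

theorem continuous_uncurry_clm_apply (hk : Continuous (Function.uncurry k)) (y : ℝ≥0 →ᵇ E) :
    Continuous (Function.uncurry fun t τ => k t τ (y τ)) :=
  hk.clm_apply (y.continuous.comp continuous_snd)

theorem norm_weightedAbelIntegral_clm_apply_le (hα : 0 < α) (hβ : 0 < β)
    (hk : Continuous (Function.uncurry k))
    (hkq : ∀ t, weightedAbelIntegral α β (fun t τ => ‖k t τ‖) t ≤ q) (y : ℝ≥0 →ᵇ E) (t : ℝ≥0) :
    ‖weightedAbelIntegral α β (fun t τ => k t τ (y τ)) t‖ ≤ q * ‖y‖ :=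
  calc
    _ ≤ weightedAbelIntegral α β (fun t τ => ‖k t τ (y τ)‖) t :=
      norm_weightedAbelIntegral_le ..
    _ ≤ weightedAbelIntegral α β (fun t τ => ‖y‖ • ‖k t τ‖) t := by
      refine weightedAbelIntegral_mono hα hβ (F₁ := fun t τ => ‖k t τ (y τ)‖)
        (F₂ := fun t τ => ‖y‖ • ‖k t τ‖) (continuous_uncurry_clm_apply hk y).norm
        (hk.norm.const_smul ‖y‖) (fun t τ => ?_) t
      rw [smul_eq_mul, mul_comm]
      exact (k t τ).le_opNorm_of_le (y.norm_coe_le_norm τ)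
    _ ≤ q * ‖y‖ := by
      rw [weightedAbelIntegral_const_smul, smul_eq_mul, mul_comm]
      gcongr
      exact hkq t

theorem exists_opNorm_le_apply_eq_weightedAbelIntegral (hα : 0 < α) (hβ : 0 < β)
    (hk : Continuous (Function.uncurry k))
    (hkq : ∀ t, weightedAbelIntegral α β (fun t τ => ‖k t τ‖) t ≤ q) :
    ∃ T : (ℝ≥0 →ᵇ E) →L[ℝ] (ℝ≥0 →ᵇ F), ‖T‖ ≤ q ∧
      ∀ y t, T y t = weightedAbelIntegral α β (fun t τ => k t τ (y τ)) t := by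
  have hbound := norm_weightedAbelIntegral_clm_apply_le hα hβ hk hkq
  have hq : 0 ≤ q := by simpa [weightedAbelIntegral] using hkq 0
  let T : (ℝ≥0 →ᵇ E) →ₗ[ℝ] (ℝ≥0 →ᵇ F) :=
    { toFun y := .ofNormedAddCommGroup _
        (continuous_weightedAbelIntegral hα hβ (continuous_uncurry_clm_apply hk y)) _ (hbound y)
      map_add' y z := by
        ext1 t
        simpa using weightedAbelIntegral_add hα hβ (continuous_uncurry_clm_apply hk y)
          (continuous_uncurry_clm_apply hk z) t
      map_smul' c y := by
        ext1 t
        simpa using weightedAbelIntegral_const_smul c (fun t τ => k t τ (y τ)) t }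
  refine ⟨T.mkContinuous q fun y => ?_, T.mkContinuous_norm_le hq _, fun y t => rfl⟩
  exact (BoundedContinuousFunction.norm_le (by positivity)).2 (hbound y)

theorem existsUnique_boundedContinuousFunction_eq_add_weightedAbelIntegral [CompleteSpace E]
    {k : ℝ≥0 → ℝ≥0 → E →L[ℝ] E} (hα : 0 < α) (hβ : 0 < β) (hk : Continuous (Function.uncurry k))
    (hkq : ∀ t, weightedAbelIntegral α β (fun t τ => ‖k t τ‖) t ≤ q) (hq : q < 1)
    (c : ℝ≥0 →ᵇ E) :
    ∃! y : ℝ≥0 →ᵇ E, ∀ t > 0, y t = c t + weightedAbelIntegral α β (fun t τ => k t τ (y τ)) t := by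
  obtain ⟨T, hT, hTapply⟩ := exists_opNorm_le_apply_eq_weightedAbelIntegral hα hβ hk hkq
  -- Both sides are continuous, so the equation on the dense set `(0, ∞)` extends to `t = 0`.
  have hiff (y : ℝ≥0 →ᵇ E) :
      (∀ t > 0, y t = c t + weightedAbelIntegral α β (fun t τ => k t τ (y τ)) t) ↔
        y = c + T y := by
    simp only [← hTapply]
    refine ⟨fun h => ?_, fun h t _ => DFunLike.congr_fun h t⟩
    have hdense : Dense (Set.Ioi (0 : ℝ≥0)) := dense_iff_closure_eq.2 (by simp)
    exact DFunLike.coe_injective (Continuous.ext_on hdense y.continuous (c + T y).continuous h)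
  simpa only [hiff] using existsUnique_eq_add_apply_of_opNorm_lt_one (hT.trans_lt hq) c

end Volterra

/-! ### The variation-of-constants equation in `C⁰_{1-α}` -/

section VariationOfConstants

open scoped NNReal BoundedContinuousFunction Matrix

variable {s : ℕ} {α : ℝ} {φ : ℝ → Fin s → ℝ}

theorem rpow_one_sub_mul_rpow_sub_one {t : ℝ} (ht : 0 < t) (α : ℝ) :
    t ^ (1 - α) * t ^ (α - 1) = 1 := by
  rw [← Real.rpow_add ht]
  simp

theorem memC0inf.exists_boundedContinuousFunction (hφ : memC0inf α φ) :
    ∃ y : ℝ≥0 →ᵇ (Fin s → ℝ), ∀ t > (0 : ℝ), φ t = t ^ (α - 1) • y t.toNNReal := by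
  obtain ⟨hcont, ⟨l, hl⟩, C, hC⟩ := hφ
  let y : ℝ≥0 → Fin s → ℝ := Function.update (fun t => (t : ℝ) ^ (1 - α) • φ t) 0 l
  have hypos (t : ℝ≥0) (ht : t ≠ 0) : y t = (t : ℝ) ^ (1 - α) • φ t := Function.update_of_ne ht ..
  have hy : Continuous y := by
    refine continuous_iff_continuousAt.2 fun t => ?_
    rcases eq_or_ne t 0 with rfl | ht
    · refine continuousAt_update_same.2 (hl.comp (tendsto_nhdsWithin_iff.2 ⟨?_, ?_⟩))
      · exact (NNReal.continuous_coe.tendsto' 0 0 NNReal.coe_zero).mono_left nhdsWithin_le_nhds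
      · filter_upwards [self_mem_nhdsWithin] with u hu
        exact NNReal.coe_pos.2 (pos_iff_ne_zero.2 hu)
    · have htpos : (0 : ℝ) < t := NNReal.coe_pos.2 (pos_iff_ne_zero.2 ht)
      have hprod : ContinuousAt (fun u : ℝ => u ^ (1 - α) • φ u) t :=
        (Real.continuousAt_rpow_const _ _ (.inl htpos.ne')).smul
          (hcont.continuousAt (Ioi_mem_nhds htpos))
      exact (continuousAt_update_of_ne ht).2
        (hprod.comp (f := ((↑) : ℝ≥0 → ℝ)) NNReal.continuous_coe.continuousAt)
  refine ⟨.ofNormedAddCommGroup y hy (max C ‖l‖) fun t => ?_, fun t ht => ?_⟩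
  · rcases eq_or_ne t 0 with rfl | ht
    · simp [y]
    · rw [hypos t ht, norm_smul, Real.norm_of_nonneg (by positivity)]
      exact (hC t t.2).trans (le_max_left _ _)
  · change φ t = t ^ (α - 1) • y t.toNNReal
    rw [hypos _ (Real.toNNReal_pos.2 ht).ne', Real.coe_toNNReal t ht.le, smul_smul, mul_comm,
      rpow_one_sub_mul_rpow_sub_one ht, one_smul]

theorem memC0inf_rpow_smul_comp_toNNReal (hα : α < 1) (y : ℝ≥0 →ᵇ (Fin s → ℝ)) :
    memC0inf α fun t => t ^ (α - 1) • y t.toNNReal := by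
  have hy : Continuous fun t : ℝ => y t.toNNReal := y.continuous.comp continuous_real_toNNReal
  refine ⟨fun t ht => ?_, ⟨y 0, ?_⟩, ‖y‖, fun t ht => ?_⟩
  · exact ((Real.continuousAt_rpow_const _ _ (.inl ht.ne')).smul
      hy.continuousAt).continuousWithinAt
  · refine ((hy.tendsto' 0 (y 0) (by simp)).mono_left nhdsWithin_le_nhds).congr' ?_
    filter_upwards [self_mem_nhdsWithin] with t ht
    rw [smul_smul, rpow_one_sub_mul_rpow_sub_one ht, one_smul]
  · rcases ht.eq_or_lt with rfl | ht
    · simp [Real.zero_rpow (sub_pos.2 hα).ne']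
    · rw [norm_smul, Real.norm_of_nonneg (by positivity), ← mul_assoc,
        rpow_one_sub_mul_rpow_sub_one ht, one_mul]
      exact y.norm_coe_le_norm _

theorem memC0inf.tendsto_atTop_zero (hα : α < 1) (hφ : memC0inf α φ) :
    Tendsto φ atTop (𝓝 0) := by
  obtain ⟨-, -, C, hC⟩ := hφ
  have hdecay : Tendsto (fun t : ℝ => t ^ (-(1 - α)) * C) atTop (𝓝 0) := by
    simpa using (tendsto_rpow_neg_atTop (sub_pos.2 hα)).mul_const C
  refine squeeze_zero_norm' ?_ hdecay
  filter_upwards [eventually_gt_atTop 0] with t ht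
  rw [Real.rpow_neg ht.le, inv_mul_eq_div, le_div_iff₀ (by positivity), mul_comm]
  exact hC t ht.le

/-- The variation-of-constants equation
`φ(t) = t^{α-1} K(t) x₀ + ∫₀ᵗ (t-τ)^{α-1} K(t-τ) (Q(τ) φ(τ)) dτ + ∫₀ᵗ (t-τ)^{α-1} K(t-τ) g(τ) dτ`
for `t > 0`. For `K(t) = E_{α,α}(t^α A)` it characterises the solutions of the Riemann–Liouville
system `D^α x = A x + Q x + g` with initial datum `x₀`. -/
def IsMildSolution (α : ℝ) (K Q : ℝ → Matrix (Fin s) (Fin s) ℝ) (g : ℝ → Fin s → ℝ)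
    (x₀ : Fin s → ℝ) (φ : ℝ → Fin s → ℝ) : Prop :=
  ∀ t > (0 : ℝ), φ t = t ^ (α - 1) • K t *ᵥ x₀
    + (∫ τ in (0 : ℝ)..t, (t - τ) ^ (α - 1) • (K (t - τ) * Q τ) *ᵥ φ τ)
    + ∫ τ in (0 : ℝ)..t, (t - τ) ^ (α - 1) • K (t - τ) *ᵥ g τ

theorem weightedAbelIntegral_eq_of_forall_rpow_smul_eq {E : Type*} [NormedAddCommGroup E]
    [NormedSpace ℝ E] {α β : ℝ} {F : ℝ≥0 → ℝ≥0 → E} {f : ℝ → E} {t : ℝ≥0}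
    (hf : ∀ τ : ℝ≥0, 0 < τ → (τ : ℝ) ^ (β - 1) • F t τ = f τ) :
    weightedAbelIntegral α β F t =
      (t : ℝ) ^ (1 - α) • ∫ τ in (0 : ℝ)..t, (t - τ) ^ (α - 1) • f τ := by
  rw [weightedAbelIntegral]
  congr 1
  refine intervalIntegral.integral_congr_ae (.of_forall fun τ hτ => ?_)
  rw [Set.uIoc_of_le t.coe_nonneg] at hτ
  have hfτ := hf τ.toNNReal (Real.toNNReal_pos.2 hτ.1)
  rw [Real.coe_toNNReal τ hτ.1.le] at hfτ
  rw [mul_smul, hfτ]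

variable {K Q : ℝ → Matrix (Fin s) (Fin s) ℝ} {g : ℝ → Fin s → ℝ} {x₀ : Fin s → ℝ}

theorem isMildSolution_iff_of_eq_rpow_smul {y : ℝ≥0 → Fin s → ℝ}
    (hφ : ∀ t > (0 : ℝ), φ t = t ^ (α - 1) • y t.toNNReal) :
    IsMildSolution α K Q g x₀ φ ↔ ∀ t : ℝ≥0, 0 < t →
      y t = (K t *ᵥ x₀ + weightedAbelIntegral α 1 (fun t τ => K (t - τ) *ᵥ g τ) t)
        + weightedAbelIntegral α α (fun t τ => (K (t - τ) * Q τ) *ᵥ y τ) t := by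
  have hg (t : ℝ≥0) := weightedAbelIntegral_eq_of_forall_rpow_smul_eq (α := α) (β := 1) (t := t)
    (F := fun t τ => K (t - τ) *ᵥ g τ) (f := fun τ => K (t - τ) *ᵥ g τ) fun τ _ => by simp
  have hQ (t : ℝ≥0) := weightedAbelIntegral_eq_of_forall_rpow_smul_eq (α := α) (β := α) (t := t)
    (F := fun t τ => (K (t - τ) * Q τ) *ᵥ y τ) (f := fun τ => (K (t - τ) * Q τ) *ᵥ φ τ)
    fun τ hτ => by rw [hφ τ hτ, Matrix.mulVec_smul, Real.toNNReal_coe]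
  have hforall (p : ℝ → Prop) : (∀ t > 0, p t) ↔ ∀ t : ℝ≥0, 0 < t → p t :=
    ⟨fun h t => h t, fun h t ht => h ⟨t, ht.le⟩ ht⟩
  refine (hforall _).trans (forall₂_congr fun t ht => ?_)
  have htpos : (0 : ℝ) < t := ht
  have hweight : (t : ℝ) ^ (1 - α) ≠ 0 := (Real.rpow_pos_of_pos htpos _).ne'
  rw [hg, hQ, ← (smul_right_injective (Fin s → ℝ) hweight).eq_iff, hφ t htpos, Real.toNNReal_coe,
    smul_add, smul_add, smul_smul, smul_smul, rpow_one_sub_mul_rpow_sub_one htpos, one_smul,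
    one_smul, add_right_comm]

theorem exists_boundedContinuousFunction_eq_add_weightedAbelIntegral (hα : 0 < α)
    (hK : Continuous K) (hKbdd : ∃ C, ∀ t, 0 ≤ t → ‖K t‖ ≤ C)
    (hg : ContinuousOn g (Set.Ici 0))
    (hgint : ∃ C, ∀ t : ℝ, 0 ≤ t →
      t ^ (1 - α) * ∫ τ in (0 : ℝ)..t, (t - τ) ^ (α - 1) * ‖K (t - τ) *ᵥ g τ‖ ≤ C)
    (x₀ : Fin s → ℝ) :
    ∃ c : ℝ≥0 →ᵇ (Fin s → ℝ), ∀ t : ℝ≥0,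
      c t = K t *ᵥ x₀ + weightedAbelIntegral α 1 (fun t τ => K (t - τ) *ᵥ g τ) t := by
  obtain ⟨CK, hCK⟩ := hKbdd
  obtain ⟨Cg, hCg⟩ := hgint
  have hg' : Continuous fun τ : ℝ≥0 => g τ :=
    hg.comp_continuous NNReal.continuous_coe fun τ => τ.coe_nonneg
  have hKg : Continuous (Function.uncurry fun t τ : ℝ≥0 => K (t - τ) *ᵥ g τ) :=
    (hK.comp (by fun_prop)).matrix_mulVec (hg'.comp continuous_snd)
  refine ⟨.ofNormedAddCommGroup _ (((hK.comp NNReal.continuous_coe).matrix_mulVec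
    (continuous_const (y := x₀))).add (continuous_weightedAbelIntegral hα one_pos hKg))
    (CK * ‖x₀‖ + Cg) fun t => ?_, fun t => rfl⟩
  refine norm_add_le_of_le ?_ ((norm_weightedAbelIntegral_le ..).trans ?_)
  · exact (Matrix.linfty_opNorm_mulVec _ _).trans (by gcongr; exact hCK t t.2)
  · rw [weightedAbelIntegral_eq_of_forall_rpow_smul_eq (f := fun τ => ‖K (t - τ) *ᵥ g τ‖)
      fun τ _ => by simp]
    exact hCg t t.2

theorem existsUnique_boundedContinuousFunction_eq_add_mulVec (hα : 0 < α)
    {M : ℝ≥0 → ℝ≥0 → Matrix (Fin s) (Fin s) ℝ} (hM : Continuous (Function.uncurry M)) {q : ℝ}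
    (hq : q < 1) (hMq : ∀ t, weightedAbelIntegral α α (fun t τ => ‖M t τ‖) t ≤ q)
    (c : ℝ≥0 →ᵇ (Fin s → ℝ)) :
    ∃! y : ℝ≥0 →ᵇ (Fin s → ℝ), ∀ t > 0,
      y t = c t + weightedAbelIntegral α α (fun t τ => M t τ *ᵥ y τ) t := by
  let toCLM : Matrix (Fin s) (Fin s) ℝ →ₗ[ℝ] (Fin s → ℝ) →L[ℝ] (Fin s → ℝ) :=
    LinearMap.toContinuousLinearMap.toLinearMap ∘ₗ Matrix.toLin'.toLinearMap
  have hnorm (B) : ‖toCLM B‖ = ‖B‖ := (Matrix.linfty_opNorm_eq_opNorm B).symm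
  have htoCLM : Continuous toCLM := LinearMap.continuous_of_finiteDimensional _
  refine existsUnique_boundedContinuousFunction_eq_add_weightedAbelIntegral
    (k := fun t τ => toCLM (M t τ)) hα hα (htoCLM.comp hM) (fun t => ?_) hq c
  simpa only [hnorm] using hMq t

theorem exists_memC0inf_isMildSolution (hα : 0 < α) (hα1 : α < 1)
    (hK : Continuous K) (hKbdd : ∃ C, ∀ t, 0 ≤ t → ‖K t‖ ≤ C)
    (hQ : ContinuousOn Q (Set.Ici 0)) {q : ℝ} (hq : q < 1)
    (hQint : ∀ t : ℝ, 0 ≤ t → t ^ (1 - α) *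
      ∫ τ in (0 : ℝ)..t, (t - τ) ^ (α - 1) * ‖K (t - τ) * Q τ‖ * τ ^ (α - 1) ≤ q)
    (hg : ContinuousOn g (Set.Ici 0))
    (hgint : ∃ C, ∀ t : ℝ, 0 ≤ t →
      t ^ (1 - α) * ∫ τ in (0 : ℝ)..t, (t - τ) ^ (α - 1) * ‖K (t - τ) *ᵥ g τ‖ ≤ C)
    (x₀ : Fin s → ℝ) :
    ∃ φ, memC0inf α φ ∧ IsMildSolution α K Q g x₀ φ ∧
      ∀ ψ, memC0inf α ψ → IsMildSolution α K Q g x₀ ψ → ∀ t > (0 : ℝ), ψ t = φ t := by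
  obtain ⟨c, hc⟩ :=
    exists_boundedContinuousFunction_eq_add_weightedAbelIntegral hα hK hKbdd hg hgint x₀
  have hQ' : Continuous fun τ : ℝ≥0 => Q τ :=
    hQ.comp_continuous NNReal.continuous_coe fun τ => τ.coe_nonneg
  have hKQ : Continuous (Function.uncurry fun t τ : ℝ≥0 => K (t - τ) * Q τ) :=
    (hK.comp (by fun_prop)).matrix_mul (hQ'.comp continuous_snd)
  have hKQint (t : ℝ≥0) : weightedAbelIntegral α α (fun t τ => ‖K (t - τ) * Q τ‖) t ≤ q := by
    rw [weightedAbelIntegral_eq_of_forall_rpow_smul_eq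
      (f := fun τ => ‖K (t - τ) * Q τ‖ * τ ^ (α - 1)) fun τ _ => mul_comm _ _]
    simpa only [smul_eq_mul, mul_assoc] using hQint t t.2
  obtain ⟨y, hy, huniq⟩ := existsUnique_boundedContinuousFunction_eq_add_mulVec hα hKQ hq hKQint c
  simp only [hc] at hy huniq
  refine ⟨fun t => t ^ (α - 1) • y t.toNNReal, memC0inf_rpow_smul_comp_toNNReal hα1 y,
    (isMildSolution_iff_of_eq_rpow_smul fun _ _ => rfl).2 hy, fun ψ hψ hψeq t ht => ?_⟩
  obtain ⟨z, hz⟩ := hψ.exists_boundedContinuousFunction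
  rw [hz t ht, huniq z ((isMildSolution_iff_of_eq_rpow_smul hz).1 hψeq)]

end VariationOfConstants

theorem stmt10 (α : ℝ) (hα0 : 0 < α) (hα1 : α < 1) (s : ℕ)
    (A : Matrix (Fin s) (Fin s) ℝ)
    (hspec : ∀ μ ∈ spectrum ℂ (A.map (algebraMap ℝ ℂ)),
      μ ≠ 0 ∧ α * Real.pi / 2 < |Complex.arg μ|)
    (Q : ℝ → Matrix (Fin s) (Fin s) ℝ) (hQc : ContinuousOn Q (Set.Ici 0))
    (q : ℝ) (hq : q < 1)
    (hQint : ∀ t : ℝ, 0 ≤ t →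
      t ^ (1 - α) * ∫ τ in (0:ℝ)..t,
        (t - τ) ^ (α - 1) * ‖ML α α ((t - τ) ^ α • A) * Q τ‖ * τ ^ (α - 1) ≤ q)
    (g : ℝ → (Fin s → ℝ)) (hgc : ContinuousOn g (Set.Ici 0))
    (hgint : ∃ C : ℝ, ∀ t : ℝ, 0 ≤ t →
      t ^ (1 - α) * ∫ τ in (0:ℝ)..t,
        (t - τ) ^ (α - 1) * ‖(ML α α ((t - τ) ^ α • A)).mulVec (g τ)‖ ≤ C) :
    ∀ x₀ : Fin s → ℝ, ∃ φ : ℝ → (Fin s → ℝ),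
      memC0inf α φ ∧
      (∀ t > (0:ℝ),
        φ t = t ^ (α - 1) • (ML α α (t ^ α • A)).mulVec x₀
          + (∫ τ in (0:ℝ)..t, (t - τ) ^ (α - 1) •
              (ML α α ((t - τ) ^ α • A) * Q τ).mulVec (φ τ))
          + ∫ τ in (0:ℝ)..t, (t - τ) ^ (α - 1) •
              (ML α α ((t - τ) ^ α • A)).mulVec (g τ)) ∧
      (∀ ψ : ℝ → (Fin s → ℝ), memC0inf α ψ →
        (∀ t > (0:ℝ),
          ψ t = t ^ (α - 1) • (ML α α (t ^ α • A)).mulVec x₀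
            + (∫ τ in (0:ℝ)..t, (t - τ) ^ (α - 1) •
                (ML α α ((t - τ) ^ α • A) * Q τ).mulVec (ψ τ))
            + ∫ τ in (0:ℝ)..t, (t - τ) ^ (α - 1) •
                (ML α α ((t - τ) ^ α • A)).mulVec (g τ)) →
        ∀ t > (0:ℝ), ψ t = φ t) ∧
      Tendsto φ atTop (𝓝 0) := by
  intro x₀
  have hK : Continuous fun t : ℝ => ML α α (t ^ α • A) :=
    continuous_matrix_mittagLeffler_rpow_smul hα0 α A
  have hKbdd : ∃ C, ∀ t : ℝ, 0 ≤ t → ‖ML α α (t ^ α • A)‖ ≤ C :=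
    exists_norm_matrix_mittagLeffler_rpow_smul_le hα0 hα1 fun μ hμ => (hspec μ hμ).2
  obtain ⟨φ, hφ, hsol, huniq⟩ :=
    exists_memC0inf_isMildSolution hα0 hα1 hK hKbdd hQc hq hQint hgc hgint x₀
  exact ⟨φ, hφ, hsol, huniq, hφ.tendsto_atTop_zero hα1⟩
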